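/- For every integer n ≥ 2 and every x ≥ 0, B̃_n(t²;x) = (n/(n−1))·(ξ''(p_n(x))/ξ(p_n(x)))·x² + (x/(n−1))·[ 2V'(1)·ξ''(p_n(x))/ξ(p_n(x)) + (2 + 2S'(1)/S(1) + U''(1))·ξ'(p_n(x))/ξ(p_n(x)) ] + (1/(n(n−1)))·[ (V'(1))²·ξ''(p_n(x))/ξ(p_n(x)) + (2(S'(1)/S(1))V'(1) + 2V'(1) + V''(1))·ξ'(p_n(x))/ξ(p_n(x)) + (2S'(1)+S''(1))/S(1) ], where B̃_n(t²;x) denotes the operator applied to the function t ↦ t². -/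

import Mathlib

open Real MeasureTheory Filter Topology

/-- `p_n(x) = n² x² T(1) + n x U(1) + V(1)`. -/
noncomputable def pnx (T U V : ℝ → ℝ) (n : ℕ) (x : ℝ) : ℝ :=
  (n : ℝ) ^ 2 * x ^ 2 * T 1 + (n : ℝ) * x * U 1 + V 1

/-- The Euler Beta function value `B(j, n+1) = Γ(j)Γ(n+1)/Γ(j+n+1)`. -/
noncomputable def betaB (j n : ℕ) : ℝ :=
  Real.Gamma (j : ℝ) * Real.Gamma ((n : ℝ) + 1) / Real.Gamma ((j : ℝ) + (n : ℝ) + 1)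

/-- The Baskakov–Durrmeyer type operator `B̃_n(f;x)`. -/
noncomputable def BDop (ξ S T U V : ℝ → ℝ) (Θ : ℕ → ℝ → ℝ) (n : ℕ) (f : ℝ → ℝ) (x : ℝ) : ℝ :=
  (S 1 * ξ (pnx T U V n x))⁻¹ *
    (Θ 0 ((n : ℝ) * x) * f 0 +
      ∑' j : ℕ, (Θ (j + 1) ((n : ℝ) * x) / betaB (j + 1) n) *
        ∫ s in Set.Ioi (0 : ℝ), s ^ j * (1 + s) ^ (-((n : ℝ) + (j : ℝ) + 2)) * f s)

lemma hs_congr {f g : ℕ → ℝ} {A : ℝ} (hfg : ∀ j, f j = g j) (h : HasSum g A) :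
    HasSum f A := by
  rw [funext hfg]; exact h

lemma ps_deriv {ρ : ℝ} {a : ℕ → ℝ} {F : ℝ → ℝ}
    (h : ∀ s ∈ Set.Ioo (-ρ) ρ, HasSum (fun j : ℕ => a j * s ^ j) (F s)) :
    ∀ s ∈ Set.Ioo (-ρ) ρ, HasDerivAt F (deriv F s) s ∧
      HasSum (fun j : ℕ => (((j : ℝ) + 1) * a (j + 1)) * s ^ j) (deriv F s) := by
  intro s hs
  have hs' : |s| < ρ := abs_lt.mpr ⟨hs.1, hs.2⟩
  obtain ⟨R, hR1, hR2⟩ := exists_between hs'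
  obtain ⟨R', hR3, hR4⟩ := exists_between hR2
  have hR0 : 0 < R := lt_of_le_of_lt (abs_nonneg s) hR1
  have hR'0 : 0 < R' := hR0.trans hR3
  have hsumR' := (h R' ⟨by linarith, hR4⟩).summable
  obtain ⟨C, hC⟩ : ∃ C, ∀ j, ‖a j * R' ^ j‖ ≤ C := by
    have := hsumR'.tendsto_atTop_zero.norm.bddAbove_range
    obtain ⟨C, hC⟩ := this
    exact ⟨C, fun j => hC ⟨j, rfl⟩⟩
  have hq : ‖R / R'‖ < 1 := by
    rw [Real.norm_of_nonneg (by positivity), div_lt_one hR'0]; exact hR3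
  have hgeo : Summable (fun j : ℕ => (C / R) * ((j : ℝ) ^ 1 * (R / R') ^ j)) :=
    (summable_pow_mul_geometric_of_norm_lt_one 1 hq).mul_left _
  have hbd : ∀ (j : ℕ) (y : ℝ), y ∈ Set.Ioo (-R) R →
      ‖a j * ((j : ℝ) * y ^ (j - 1))‖ ≤ (C / R) * ((j : ℝ) ^ 1 * (R / R') ^ j) := by
    intro j y hy
    have hyR : |y| ≤ R := (abs_lt.mpr ⟨hy.1, hy.2⟩).le
    rcases j with _ | j
    · simp
    · have h1 := hC (j + 1)
      rw [norm_mul, norm_pow, Real.norm_of_nonneg hR'0.le] at h1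
      have h2 : ‖a (j + 1)‖ ≤ C / R' ^ (j + 1) := by
        rw [le_div_iff₀ (by positivity)]; exact h1
      rw [norm_mul, norm_mul, norm_pow, Real.norm_natCast, Real.norm_eq_abs y]
      have hC0 : 0 ≤ C := (norm_nonneg _).trans (hC 0)
      calc ‖a (j + 1)‖ * (((j + 1 : ℕ) : ℝ) * |y| ^ (j + 1 - 1))
          ≤ C / R' ^ (j + 1) * (((j + 1 : ℕ) : ℝ) * R ^ j) := by
            simp only [Nat.add_sub_cancel]
            gcongr
        _ = C / R * (((j + 1 : ℕ) : ℝ) ^ 1 * (R / R') ^ (j + 1)) := by rw [div_pow]; field_simp; ring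
  have hmem : s ∈ Set.Ioo (-R) R := abs_lt.mp hR1
  have hsub : ∀ y ∈ Set.Ioo (-R) R, y ∈ Set.Ioo (-ρ) ρ :=
    fun y hy => ⟨by linarith [hy.1], by linarith [hy.2]⟩
  have key := hasDerivAt_tsum_of_isPreconnected (g := fun (j : ℕ) (y : ℝ) => a j * y ^ j)
    (g' := fun (j : ℕ) (y : ℝ) => a j * ((j : ℝ) * y ^ (j - 1))) hgeo isOpen_Ioo
    isPreconnected_Ioo (fun j y _ => (hasDerivAt_pow j y).const_mul (a j)) hbd hmem
    (h s hs).summable hmem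
  have heq : F =ᶠ[𝓝 s] fun z => ∑' j : ℕ, a j * z ^ j := by
    filter_upwards [isOpen_Ioo.mem_nhds hmem] with y hy
    exact (h y (hsub y hy)).tsum_eq.symm
  have key2 := key.congr_of_eventuallyEq heq
  rw [key2.deriv]
  refine ⟨key2, ?_⟩
  have hsm : Summable (fun j : ℕ => a j * ((j : ℝ) * s ^ (j - 1))) :=
    Summable.of_norm_bounded hgeo (fun j => hbd j s hmem)
  have h3 := (hasSum_nat_add_iff' 1).mpr hsm.hasSum
  simp only [Finset.sum_range_one, Nat.cast_zero, zero_mul, mul_zero, sub_zero,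
    Nat.add_sub_cancel] at h3
  refine hs_congr (fun j => ?_) h3
  push_cast; ring

lemma ps_deriv2 {ρ : ℝ} {a : ℕ → ℝ} {F : ℝ → ℝ}
    (h : ∀ s ∈ Set.Ioo (-ρ) ρ, HasSum (fun j : ℕ => a j * s ^ j) (F s)) :
    ∀ s ∈ Set.Ioo (-ρ) ρ, HasDerivAt (deriv F) (deriv (deriv F) s) s ∧
      HasSum (fun j : ℕ => (((j : ℝ) + 1) * (((j : ℝ) + 2) * a (j + 2))) * s ^ j)
        (deriv (deriv F) s) := by
  intro s hs
  have := ps_deriv (fun s hs => (ps_deriv h s hs).2) s hs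
  refine ⟨this.1, ?_⟩
  refine hs_congr (fun j => ?_) this.2
  push_cast; ring

lemma ps_shift {k : ℕ} {a : ℕ → ℝ} {s y : ℝ}
    (h : HasSum (fun j : ℕ => a j * s ^ (j + k)) y) :
    HasSum (fun j : ℕ => (if j < k then 0 else a (j - k)) * s ^ j) y := by
  rw [← hasSum_nat_add_iff' k]
  have : ∑ i ∈ Finset.range k, (if i < k then 0 else a (i - k)) * s ^ i = 0 := by
    apply Finset.sum_eq_zero
    intro i hi
    simp [Finset.mem_range.mp hi]
  rw [this, sub_zero]
  simpa using h

lemma int_base (c : ℕ) (hc : 2 ≤ c) :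
    IntegrableOn (fun s : ℝ => ((1 + s) ^ c)⁻¹) (Set.Ioi 0) ∧
    ∫ s in Set.Ioi (0 : ℝ), ((1 + s) ^ c)⁻¹ = 1 / ((c : ℝ) - 1) := by
  obtain ⟨d, rfl⟩ : ∃ d, c = d + 2 := ⟨c - 2, by omega⟩
  have hder : ∀ s ∈ Set.Ici (0 : ℝ), HasDerivAt
      (fun s : ℝ => -(1 / ((d : ℝ) + 1)) * ((1 + s) ^ (d + 1))⁻¹) (((1 + s) ^ (d + 2))⁻¹) s := by
    intro s hs
    have hs' : (0 : ℝ) < 1 + s := by have : (0:ℝ) ≤ s := hs; linarith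
    have h1 : HasDerivAt (fun s : ℝ => 1 + s) 1 s := (hasDerivAt_id s).const_add 1
    have h2 := ((h1.fun_pow (d + 1)).fun_inv (by positivity)).const_mul (-(1 / ((d : ℝ) + 1)))
    refine h2.congr_deriv ?_
    simp only [Nat.add_sub_cancel]
    push_cast
    field_simp
    ring
  have hlim : Tendsto (fun s : ℝ => -(1 / ((d : ℝ) + 1)) * ((1 + s) ^ (d + 1))⁻¹) atTop
      (𝓝 0) := by
    have h1 : Tendsto (fun s : ℝ => 1 + s) atTop atTop := tendsto_atTop_add_const_left _ _ tendsto_id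
    have h2 := ((tendsto_pow_atTop (Nat.succ_ne_zero d)).comp h1).inv_tendsto_atTop.const_mul
      (-(1 / ((d : ℝ) + 1)))
    simpa using h2
  have hpos : ∀ s ∈ Set.Ioi (0 : ℝ), 0 ≤ ((1 + s) ^ (d + 2))⁻¹ := by
    intro s hs
    have : (0 : ℝ) < s := hs
    positivity
  refine ⟨integrableOn_Ioi_deriv_of_nonneg' hder hpos hlim, ?_⟩
  rw [integral_Ioi_of_hasDerivAt_of_nonneg' hder hpos hlim]
  push_cast
  simp
  ring

lemma int_integrable (a m : ℕ) :
    IntegrableOn (fun s : ℝ => s ^ a * ((1 + s) ^ (m + a + 2))⁻¹) (Set.Ioi 0) := by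
  refine Integrable.mono' (int_base (m + 2) (by omega)).1 ?_ ?_
  · apply Measurable.aestronglyMeasurable
    fun_prop
  · filter_upwards [ae_restrict_mem measurableSet_Ioi] with s hs
    have hs' : (0 : ℝ) < s := hs
    rw [Real.norm_of_nonneg (by positivity)]
    have h1 : s ^ a ≤ (1 + s) ^ a := by gcongr; linarith
    rw [← div_eq_mul_inv, div_le_iff₀ (by positivity)]
    calc s ^ a ≤ (1 + s) ^ a := h1
      _ = _ := by
        rw [show m + a + 2 = (m + 2) + a by ring, pow_add (1 + s) (m + 2) a]
        field_simp

lemma int_val (a m : ℕ) :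
    ∫ s in Set.Ioi (0 : ℝ), s ^ a * ((1 + s) ^ (m + a + 2))⁻¹ =
      (a.factorial : ℝ) * m.factorial / (m + a + 1).factorial := by
  induction a with
  | zero =>
    simp only [pow_zero, one_mul, add_zero]
    rw [(int_base (m + 2) (by omega)).2, Nat.factorial_succ]
    push_cast
    have : (m : ℝ) + 2 - 1 = m + 1 := by ring
    rw [this]
    simp
    field_simp
  | succ a ih =>
    have hder : ∀ s ∈ Set.Ici (0 : ℝ), HasDerivAt
        (fun s : ℝ => s ^ (a + 1) * ((1 + s) ^ (m + a + 2))⁻¹)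
        (((a : ℝ) + 1) * (s ^ a * ((1 + s) ^ (m + a + 2))⁻¹) -
          ((m : ℝ) + a + 2) * (s ^ (a + 1) * ((1 + s) ^ (m + (a + 1) + 2))⁻¹)) s := by
      intro s hs
      have hs' : (0 : ℝ) < 1 + s := by have : (0:ℝ) ≤ s := hs; linarith
      have h1 : HasDerivAt (fun s : ℝ => 1 + s) 1 s := (hasDerivAt_id s).const_add 1
      have h2 := (hasDerivAt_pow (a + 1) s).fun_mul
        ((h1.fun_pow (m + a + 2)).fun_inv (by positivity))
      refine h2.congr_deriv ?_
      simp only [Nat.add_sub_cancel, show m + a + 2 - 1 = m + a + 1 by omega]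
      push_cast
      field_simp
      ring
    have hi1 := (int_integrable a m).const_mul ((a : ℝ) + 1)
    have hi2 := (int_integrable (a + 1) m).const_mul ((m : ℝ) + a + 2)
    have hlim : Tendsto (fun s : ℝ => s ^ (a + 1) * ((1 + s) ^ (m + a + 2))⁻¹) atTop (𝓝 0) := by
      have h1 : Tendsto (fun s : ℝ => 1 + s) atTop atTop :=
        tendsto_atTop_add_const_left _ _ tendsto_id
      have h2 := h1.inv_tendsto_atTop
      refine tendsto_of_tendsto_of_tendsto_of_le_of_le' tendsto_const_nhds h2 ?_ ?_
      · filter_upwards [eventually_ge_atTop (0 : ℝ)] with s hs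
        positivity
      · filter_upwards [eventually_ge_atTop (0 : ℝ)] with s hs
        have h3 : s ^ (a + 1) ≤ (1 + s) ^ (m + a + 1) := by
          calc s ^ (a + 1) ≤ (1 + s) ^ (a + 1) := by gcongr; linarith
            _ ≤ _ := pow_le_pow_right₀ (by linarith) (by omega)
        rw [← div_eq_mul_inv, div_le_iff₀ (by positivity)]
        calc _ ≤ _ := h3
          _ = _ := by
            simp only [Pi.inv_apply]
            rw [pow_succ (1 + s) (m + a + 1)]
            field_simp
    have h := integral_Ioi_of_hasDerivAt_of_tendsto' hder (hi1.sub hi2) hlim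
    rw [integral_sub hi1 hi2, integral_const_mul, integral_const_mul, ih] at h
    simp only [ne_eq, Nat.add_eq_zero_iff, one_ne_zero, and_false, not_false_eq_true, zero_pow,
      zero_mul, sub_zero] at h
    have h4 : ((m : ℝ) + a + 2) ≠ 0 := by positivity
    have h5 : ((m + a + 1).factorial : ℝ) ≠ 0 := by positivity
    rw [show m + (a + 1) + 1 = (m + a + 1) + 1 by ring, Nat.factorial_succ (m + a + 1),
      Nat.factorial_succ a]
    push_cast
    have h6 : ∫ s in Set.Ioi (0 : ℝ), s ^ (a + 1) * ((1 + s) ^ (m + (a + 1) + 2))⁻¹ =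
       (((a : ℝ) + 1) * ((a.factorial : ℝ) * m.factorial / (m + a + 1).factorial)) /
         ((m : ℝ) + a + 2) := by
      rw [eq_div_iff h4]; linarith
    rw [h6]
    field_simp
    ring

lemma term_val (n : ℕ) (hn : 2 ≤ n) (j : ℕ) (θ : ℝ) :
    θ / betaB (j + 1) n *
        ∫ s in Set.Ioi (0 : ℝ), s ^ j * (1 + s) ^ (-((n : ℝ) + (j : ℝ) + 2)) * (s ^ 2) =
      ((j : ℝ) + 1) * ((j : ℝ) + 2) * θ / ((n : ℝ) * ((n : ℝ) - 1)) := by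
  obtain ⟨m, rfl⟩ : ∃ m, n = m + 2 := ⟨n - 2, by omega⟩
  have h1 : ∫ s in Set.Ioi (0 : ℝ),
      s ^ j * (1 + s) ^ (-(((m + 2 : ℕ) : ℝ) + (j : ℝ) + 2)) * (s ^ 2) =
      ∫ s in Set.Ioi (0 : ℝ), s ^ (j + 2) * ((1 + s) ^ (m + (j + 2) + 2))⁻¹ := by
    apply setIntegral_congr_fun measurableSet_Ioi
    intro s hs
    have hs' : (0 : ℝ) < s := hs
    simp only
    rw [Real.rpow_neg (by positivity),
      show (((m + 2 : ℕ) : ℝ) + (j : ℝ) + 2) = ((m + (j + 2) + 2 : ℕ) : ℝ) by push_cast; ring,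
      Real.rpow_natCast]
    ring
  rw [h1, int_val]
  unfold betaB
  have e1 : Real.Gamma ((j + 1 : ℕ) : ℝ) = j.factorial := by
    push_cast; exact Real.Gamma_nat_eq_factorial j
  have e2 : Real.Gamma (((m + 2 : ℕ) : ℝ) + 1) = (m + 2).factorial :=
    Real.Gamma_nat_eq_factorial _
  have e3 : Real.Gamma (((j + 1 : ℕ) : ℝ) + ((m + 2 : ℕ) : ℝ) + 1) = (m + (j + 2) + 1).factorial := by
    rw [← Real.Gamma_nat_eq_factorial]; congr 1; push_cast; ring
  rw [e1, e2, e3]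
  have f1 : ((m + (j + 2) + 1).factorial : ℝ) ≠ 0 := by positivity
  have f2 : (m.factorial : ℝ) ≠ 0 := by positivity
  have f3 : (j.factorial : ℝ) ≠ 0 := by positivity
  have f4 : (((m + 2 : ℕ) : ℝ) - 1) = (m : ℝ) + 1 := by push_cast; ring
  rw [f4, Nat.factorial_succ (m + 1), Nat.factorial_succ m, Nat.factorial_succ (j + 1),
    Nat.factorial_succ j]
  push_cast
  field_simp
  ring

lemma sum_shift {θ : ℕ → ℝ} {A : ℝ}
    (h : HasSum (fun j : ℕ => ((j : ℝ) + 1) * (((j : ℝ) + 2) * θ (j + 2))) A) :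
    HasSum (fun j : ℕ => ((j : ℝ) + 1) * ((j : ℝ) * θ (j + 1))) A := by
  rw [← hasSum_nat_add_iff' 1]
  simp only [Finset.sum_range_one, Nat.cast_zero, zero_mul, mul_zero, sub_zero]
  refine hs_congr (fun j => ?_) h
  push_cast; ring

lemma sum_terms {θ : ℕ → ℝ} {A : ℝ} (n : ℕ) (hn : 2 ≤ n)
    (h : HasSum (fun j : ℕ => (((j : ℝ) + 1) * ((j : ℝ) * θ (j + 1)) +
      2 * (((j : ℝ) + 1) * θ (j + 1))) * ((n : ℝ) * ((n : ℝ) - 1))⁻¹) A) :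
    HasSum (fun j : ℕ => (θ (j + 1) / betaB (j + 1) n) *
        ∫ s in Set.Ioi (0 : ℝ), s ^ j * (1 + s) ^ (-((n : ℝ) + (j : ℝ) + 2)) * s ^ 2) A := by
  simp only [term_val n hn]
  refine hs_congr (fun j => ?_) h
  rw [div_eq_mul_inv]; ring

theorem stmt5
    (ρ : ℝ) (hρ : 1 < ρ)
    (ξ S T U V : ℝ → ℝ) (Θ : ℕ → ℝ → ℝ)
    (p q r u v : ℕ → ℝ)
    (hξser : ∀ t : ℝ, HasSum (fun j : ℕ => p j * t ^ j) (ξ t))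
    (hξnn : ∀ t : ℝ, 0 ≤ ξ t)
    (hSser : ∀ s ∈ Set.Ioo (-ρ) ρ, HasSum (fun j : ℕ => q j * s ^ j) (S s))
    (hTser : ∀ s ∈ Set.Ioo (-ρ) ρ, HasSum (fun j : ℕ => r j * s ^ (j + 1)) (T s))
    (hUser : ∀ s ∈ Set.Ioo (-ρ) ρ, HasSum (fun j : ℕ => u j * s ^ (j + 2)) (U s))
    (hVser : ∀ s ∈ Set.Ioo (-ρ) ρ, HasSum (fun j : ℕ => v j * s ^ (j + 3)) (V s))
    (hS1 : 0 < S 1)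
    (hT'1 : deriv T 1 = 0) (hT''1 : deriv (deriv T) 1 = 0) (hU'1 : deriv U 1 = 1)
    (hΘnn : ∀ (j : ℕ) (y : ℝ), 0 ≤ y → 0 ≤ Θ j y)
    (hgen : ∀ y : ℝ, 0 ≤ y → ∀ s ∈ Set.Ioo (-ρ) ρ,
      HasSum (fun j : ℕ => Θ j y * s ^ j) (S s * ξ (y ^ 2 * T s + y * U s + V s)))
    (hξp : ∀ (m : ℕ), 1 ≤ m → ∀ y : ℝ, 0 ≤ y → 0 < ξ (pnx T U V m y))
    (n : ℕ) (hn : 2 ≤ n) (x : ℝ) (hx : 0 ≤ x) :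
    BDop ξ S T U V Θ n (fun t => t ^ 2) x =
      (n : ℝ) / ((n : ℝ) - 1) *
          (deriv (deriv ξ) (pnx T U V n x) / ξ (pnx T U V n x)) * x ^ 2 +
        (x / ((n : ℝ) - 1)) *
          (2 * deriv V 1 * (deriv (deriv ξ) (pnx T U V n x) / ξ (pnx T U V n x)) +
            (2 + 2 * deriv S 1 / S 1 + deriv (deriv U) 1) *
              (deriv ξ (pnx T U V n x) / ξ (pnx T U V n x))) +
        (1 / ((n : ℝ) * ((n : ℝ) - 1))) *
          ((deriv V 1) ^ 2 * (deriv (deriv ξ) (pnx T U V n x) / ξ (pnx T U V n x)) +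
            (2 * (deriv S 1 / S 1) * deriv V 1 + 2 * deriv V 1 + deriv (deriv V) 1) *
              (deriv ξ (pnx T U V n x) / ξ (pnx T U V n x)) +
            (2 * deriv S 1 + deriv (deriv S) 1) / S 1) := by
  have hn0 : (n : ℝ) ≠ 0 := by positivity
  have hn1 : (n : ℝ) - 1 ≠ 0 := by
    have : (2 : ℝ) ≤ n := by exact_mod_cast hn
    linarith
  have hP := hξp n (by omega) x hx
  have hy : 0 ≤ (n : ℝ) * x := by positivity
  have h1mem : (1 : ℝ) ∈ Set.Ioo (-ρ) ρ := ⟨by linarith, hρ⟩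
  obtain ⟨y, hydef⟩ : ∃ y, y = (n : ℝ) * x := ⟨_, rfl⟩
  rw [← hydef] at hy
  have hpn : pnx T U V n x = y ^ 2 * T 1 + y * U 1 + V 1 := by
    rw [hydef]; unfold pnx; ring
  -- derivatives
  have hT := fun s hs => ps_shift (k := 1) (hTser s hs)
  have hU := fun s hs => ps_shift (k := 2) (hUser s hs)
  have hV := fun s hs => ps_shift (k := 3) (hVser s hs)
  have hξd : ∀ t, HasDerivAt ξ (deriv ξ t) t := fun t =>
    (ps_deriv (ρ := |t| + 1) (fun s _ => hξser s) t
      ⟨by linarith [neg_abs_le t], by linarith [le_abs_self t]⟩).1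
  have hξd2 : ∀ t, HasDerivAt (deriv ξ) (deriv (deriv ξ) t) t := fun t =>
    (ps_deriv2 (ρ := |t| + 1) (fun s _ => hξser s) t
      ⟨by linarith [neg_abs_le t], by linarith [le_abs_self t]⟩).1
  have hφ : ∀ s ∈ Set.Ioo (-ρ) ρ, HasDerivAt (fun s => y ^ 2 * T s + y * U s + V s)
      (y ^ 2 * deriv T s + y * deriv U s + deriv V s) s := fun s hs =>
    (((ps_deriv hT s hs).1.const_mul (y ^ 2)).add ((ps_deriv hU s hs).1.const_mul y)).add
      (ps_deriv hV s hs).1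
  have hφ2 : HasDerivAt (fun s => y ^ 2 * deriv T s + y * deriv U s + deriv V s)
      (y ^ 2 * deriv (deriv T) 1 + y * deriv (deriv U) 1 + deriv (deriv V) 1) 1 :=
    (((ps_deriv2 hT 1 h1mem).1.const_mul (y ^ 2)).add
      ((ps_deriv2 hU 1 h1mem).1.const_mul y)).add (ps_deriv2 hV 1 h1mem).1
  have hG := hgen y hy
  have hGd : ∀ s ∈ Set.Ioo (-ρ) ρ,
      HasDerivAt (fun s => S s * ξ (y ^ 2 * T s + y * U s + V s))
        (deriv S s * ξ (y ^ 2 * T s + y * U s + V s) +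
          S s * (deriv ξ (y ^ 2 * T s + y * U s + V s) *
            (y ^ 2 * deriv T s + y * deriv U s + deriv V s))) s := fun s hs =>
    (ps_deriv hSser s hs).1.mul ((hξd _).comp s (hφ s hs))
  have hGd2 := ((ps_deriv2 hSser 1 h1mem).1.mul ((hξd _).comp 1 (hφ 1 h1mem))).add
    ((ps_deriv hSser 1 h1mem).1.mul (((hξd2 _).comp 1 (hφ 1 h1mem)).mul hφ2))
  have hGe : deriv (fun s => S s * ξ (y ^ 2 * T s + y * U s + V s)) =ᶠ[𝓝 1]
      ((deriv S * ξ ∘ fun s => y ^ 2 * T s + y * U s + V s) +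
        S * ((deriv ξ ∘ fun s => y ^ 2 * T s + y * U s + V s) *
          fun s => y ^ 2 * deriv T s + y * deriv U s + deriv V s)) := by
    filter_upwards [isOpen_Ioo.mem_nhds h1mem] with s hs
    exact (hGd s hs).deriv
  have e1 := (ps_deriv hG 1 h1mem).2
  have e2 := (ps_deriv2 hG 1 h1mem).2
  rw [(hGd 1 h1mem).deriv] at e1
  rw [(hGd2.congr_of_eventuallyEq hGe).deriv] at e2
  simp only [one_pow, mul_one, Function.comp, Pi.mul_apply, hT'1, hT''1, hU'1, mul_zero, zero_add] at e1 e2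
  have e3 := sum_shift (θ := fun j => Θ j y) e2
  have e4 := (e3.add (e1.mul_left 2)).mul_right (((n : ℝ) * ((n : ℝ) - 1))⁻¹)
  have e5 := sum_terms (θ := fun j => Θ j y) n hn e4
  unfold BDop
  simp only
  rw [← hydef, e5.tsum_eq, hpn]
  rw [hpn] at hP
  generalize ξ (y ^ 2 * T 1 + y * U 1 + V 1) = A at *
  generalize deriv ξ (y ^ 2 * T 1 + y * U 1 + V 1) = B at *
  generalize deriv (deriv ξ) (y ^ 2 * T 1 + y * U 1 + V 1) = C at *
  have hA : A ≠ 0 := hP.ne'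
  have hS : S 1 ≠ 0 := hS1.ne'
  subst hydef
  field_simp
  ring
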